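/- Let C be a category in which every span can be completed to a pullback square. Suppose the span u : X ⟶ Y, u' : X ⟶ Z has a minimal pullback completion (W, x : Y ⟶ W, x' : Z ⟶ W): the square u ≫ x = u' ≫ x' is a pullback, and for every other pullback completion (W₁, x₁ : Y ⟶ W₁, x₁' : Z ⟶ W₁) of the same span there is a unique t : W ⟶ W₁ with x ≫ t = x₁ and x' ≫ t = x₁'. Then x and x' are jointly epic: for all f, g : W ⟶ V, if x ≫ f = x ≫ g and x' ≫ f = x' ≫ g then f = g. -/

import Mathlib

open CategoryTheory

/-!
If `(f, f)` completes to a pullback square, then its two equal projections `f`, `f` are jointly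
monic, so `f` is a monomorphism. Hence every morphism `f` out of `W` is monic, and composing the
minimal completion `(x, x')` with `f` gives another completion `(x ≫ f, x' ≫ f)` of the same span.
Both `f` and `g` are comparison morphisms to it, so they agree by uniqueness.
-/

section

variable {C : Type*} [Category C]

theorem mono_of_isPullback_self {X Y W : C} {f : X ⟶ Y} {x x' : Y ⟶ W}
    (h : IsPullback f f x x') : Mono f :=
  ⟨fun _ _ e => h.hom_ext e e⟩

theorem isPullback_comp_mono {X Y Z W V : C} {u : X ⟶ Y} {u' : X ⟶ Z} {x : Y ⟶ W} {x' : Z ⟶ W}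
    (h : IsPullback u u' x x') (i : W ⟶ V) [Mono i] : IsPullback u u' (x ≫ i) (x' ≫ i) :=
  ⟨⟨h.w_assoc i⟩, ⟨Limits.PullbackCone.isLimitOfCompMono x x' i _ h.isLimit⟩⟩

theorem jointly_epic_of_minimal_pullback_general {X Y Z W : C} {u : X ⟶ Y} {u' : X ⟶ Z}
    {x : Y ⟶ W} {x' : Z ⟶ W} (hpb : IsPullback u u' x x')
    (huniq : ∀ {W₁ : C} (x₁ : Y ⟶ W₁) (x₁' : Z ⟶ W₁), IsPullback u u' x₁ x₁' →
      {t : W ⟶ W₁ | x ≫ t = x₁ ∧ x' ≫ t = x₁'}.Subsingleton)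
    {V : C} (f g : W ⟶ V) [Mono f] (hxf : x ≫ f = x ≫ g) (hxf' : x' ≫ f = x' ≫ g) :
    f = g :=
  huniq (x ≫ f) (x' ≫ f) (isPullback_comp_mono hpb f) ⟨rfl, rfl⟩ ⟨hxf.symm, hxf'.symm⟩

end

/-- The legs of a minimal pullback completion of a span are jointly epic. -/
theorem jointly_epic_of_minimal_pullback {C : Type*} [Category C]
    (H : ∀ {X Y Z : C} (u : X ⟶ Y) (u' : X ⟶ Z),
      ∃ (W : C) (x : Y ⟶ W) (x' : Z ⟶ W), IsPullback u u' x x')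
    {X Y Z W : C} (u : X ⟶ Y) (u' : X ⟶ Z) (x : Y ⟶ W) (x' : Z ⟶ W)
    (hpb : IsPullback u u' x x')
    (hmin : ∀ {W₁ : C} (x₁ : Y ⟶ W₁) (x₁' : Z ⟶ W₁), IsPullback u u' x₁ x₁' →
      ∃! t : W ⟶ W₁, x ≫ t = x₁ ∧ x' ≫ t = x₁')
    {V : C} (f g : W ⟶ V) (hxf : x ≫ f = x ≫ g) (hxf' : x' ≫ f = x' ≫ g) :
    f = g := by
  obtain ⟨_, _, _, hff⟩ := H f f
  have : Mono f := mono_of_isPullback_self hff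
  exact jointly_epic_of_minimal_pullback_general hpb
    (fun x₁ x₁' h _ ht _ ht' => (hmin x₁ x₁' h).unique ht ht') f g hxf hxf'
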